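/- Let X be a separable Banach space and let T : X → X be a hypercyclic bounded linear operator. Then for every α > 0, the set of vectors x ∈ HC(T) such that the upper density of N_T(x, B_α) equals c(T) is comeager in X. -/

import Mathlib

/-! For open `U`, the count `#(N_T(x, U) ∩ [1, n])` is lower semicontinuous in `x`, and the upper
density of `N_T(x, U)` does not decrease along the orbit of `x`. So if one hypercyclic vector visits
`U` with upper density greater than `d`, then, its orbit being dense, so do densely many vectors,
and residually many vectors visit `U` with upper density at least `d`. By linearity, a hypercyclic
vector visiting `B_R` can be shrunk to one visiting the open ball of radius `α` at the same times;
applied to countably many pairs `(R, x)` approximating the supremum `c(T)`, this proves the claim.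
-/

open MeasureTheory Filter Topology Set Metric

/-- The upper density of a set of natural numbers:
`limsup_{N→∞} #(A ∩ [1,N]) / N`. -/
noncomputable def upperDensity (A : Set ℕ) : ℝ :=
  Filter.limsup (fun N : ℕ => (Nat.card ↥(A ∩ Set.Icc 1 N) : ℝ) / N) Filter.atTop

/-- `x` is a hypercyclic point for `T`: its orbit is dense. -/
def HypPt {X : Type*} [TopologicalSpace X] (T : X → X) (x : X) : Prop :=
  Dense (Set.range fun n : ℕ => T^[n] x)

/-- The parameter `c(T)`:
`c(T) = sup_{R>0} sup_{x ∈ HC(T)} upperDensity {n | T^[n] x ∈ B̄(0,R)}`. -/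
noncomputable def cConst {X : Type*} [NormedAddCommGroup X] (T : X → X) : ℝ :=
  sSup {c : ℝ | ∃ R : ℝ, 0 < R ∧ ∃ x : X, HypPt T x ∧
    c = upperDensity {n : ℕ | T^[n] x ∈ Metric.closedBall 0 R}}

section UpperDensity

/-- The proportion `#(A ∩ [1, n]) / n` of `A` in the initial segment `[1, n]`; the upper density of
`A` is its `limsup`. The value at `n = 0` is `0`. -/
noncomputable def prefixDensity (A : Set ℕ) (n : ℕ) : ℝ :=
  (A ∩ Icc 1 n).ncard / n

variable {A B : Set ℕ} {d : ℝ}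

lemma upperDensity_eq_limsup (A : Set ℕ) : upperDensity A = limsup (prefixDensity A) atTop := by
  simp only [upperDensity, Nat.card_coe_set_eq]
  rfl

lemma prefixDensity_nonneg (A : Set ℕ) (n : ℕ) : 0 ≤ prefixDensity A n := by
  unfold prefixDensity
  positivity

lemma prefixDensity_le_of_inter_subset {n : ℕ} (h : A ∩ Icc 1 n ⊆ B) :
    prefixDensity A n ≤ prefixDensity B n := by
  have hcard : (A ∩ Icc 1 n).ncard ≤ (B ∩ Icc 1 n).ncard :=
    ncard_le_ncard (subset_inter h inter_subset_right) ((finite_Icc 1 n).inter_of_right B)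
  unfold prefixDensity
  gcongr

lemma prefixDensity_le_one (A : Set ℕ) (n : ℕ) : prefixDensity A n ≤ 1 := by
  have hcard : (A ∩ Icc 1 n).ncard ≤ n := by
    simpa using ncard_le_ncard (s := A ∩ Icc 1 n) inter_subset_right (finite_Icc 1 n)
  exact div_le_one_of_le₀ (mod_cast hcard) n.cast_nonneg

lemma isBoundedUnder_prefixDensity (A : Set ℕ) :
    IsBoundedUnder (· ≤ ·) atTop (prefixDensity A) :=
  isBoundedUnder_of ⟨1, prefixDensity_le_one A⟩

lemma isCoboundedUnder_prefixDensity (A : Set ℕ) :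
    IsCoboundedUnder (· ≤ ·) atTop (prefixDensity A) :=
  (isBoundedUnder_of ⟨0, prefixDensity_nonneg A⟩).isCoboundedUnder_le

lemma upperDensity_le_one (A : Set ℕ) : upperDensity A ≤ 1 := by
  rw [upperDensity_eq_limsup]
  exact limsup_le_of_le (isCoboundedUnder_prefixDensity A) (.of_forall (prefixDensity_le_one A))

lemma upperDensity_mono (h : A ⊆ B) : upperDensity A ≤ upperDensity B := by
  rw [upperDensity_eq_limsup, upperDensity_eq_limsup]
  exact limsup_le_limsup
    (.of_forall fun _ ↦ prefixDensity_le_of_inter_subset (inter_subset_left.trans h))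
    (isCoboundedUnder_prefixDensity A) (isBoundedUnder_prefixDensity B)

lemma frequently_lt_prefixDensity (h : d < upperDensity A) :
    ∃ᶠ n in atTop, d < prefixDensity A n :=
  frequently_lt_of_lt_limsup (isCoboundedUnder_prefixDensity A) (upperDensity_eq_limsup A ▸ h)

lemma le_upperDensity_of_frequently (h : ∃ᶠ n in atTop, d ≤ prefixDensity A n) :
    d ≤ upperDensity A := by
  rw [upperDensity_eq_limsup]
  exact le_limsup_of_frequently_le h (isBoundedUnder_prefixDensity A)

lemma ncard_inter_Icc_le_add (A : Set ℕ) (m n : ℕ) :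
    (A ∩ Icc 1 n).ncard ≤ m + ((· + m) ⁻¹' A ∩ Icc 1 n).ncard := by
  set S := (· + m) ⁻¹' A ∩ Icc 1 n
  have hS : S.Finite := (finite_Icc 1 n).inter_of_right _
  have hsub : A ∩ Icc 1 n ⊆ Icc 1 m ∪ (· + m) '' S := by
    rintro k ⟨hkA, hk_pos, hkn⟩
    rcases le_or_gt k m with hkm | hmk
    · exact .inl ⟨hk_pos, hkm⟩
    · have hk : k - m + m = k := Nat.sub_add_cancel hmk.le
      exact .inr ⟨k - m, ⟨mem_preimage.2 (by rwa [hk]), by omega, by omega⟩, hk⟩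
  calc (A ∩ Icc 1 n).ncard
      ≤ (Icc 1 m ∪ (· + m) '' S).ncard := ncard_le_ncard hsub ((finite_Icc 1 m).union (hS.image _))
    _ ≤ (Icc 1 m).ncard + ((· + m) '' S).ncard := ncard_union_le _ _
    _ ≤ m + S.ncard := add_le_add (by simp) (ncard_image_le hS)

lemma prefixDensity_le_div_add (A : Set ℕ) (m n : ℕ) :
    prefixDensity A n ≤ m / n + prefixDensity ((· + m) ⁻¹' A) n := by
  unfold prefixDensity
  rw [← add_div]
  gcongr
  exact mod_cast ncard_inter_Icc_le_add A m n

lemma upperDensity_le_preimage_add (A : Set ℕ) (m : ℕ) :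
    upperDensity A ≤ upperDensity ((· + m) ⁻¹' A) := by
  refine le_of_forall_lt_imp_le_of_dense fun d hd ↦ ?_
  obtain ⟨e, hde, he⟩ := exists_between hd
  have hsmall : ∀ᶠ n : ℕ in atTop, (m : ℝ) / n < e - d :=
    (tendsto_const_div_atTop_nhds_zero_nat (m : ℝ)).eventually_lt_const (sub_pos.2 hde)
  refine le_upperDensity_of_frequently
    (((frequently_lt_prefixDensity he).and_eventually hsmall).mono fun n hn ↦ ?_)
  linarith [prefixDensity_le_div_add A m n, hn.1, hn.2]

end UpperDensity

/-- The set `N_T(x, B)` of times at which the orbit of `x` under `T` visits `B`. -/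
def visitTimes {X : Type*} (T : X → X) (x : X) (B : Set X) : Set ℕ :=
  {n | T^[n] x ∈ B}

lemma visitTimes_iterate {X : Type*} (T : X → X) (x : X) (B : Set X) (m : ℕ) :
    visitTimes T (T^[m] x) B = (· + m) ⁻¹' visitTimes T x B := by
  ext n
  simp only [visitTimes, mem_ofPred_eq, mem_preimage, Function.iterate_add_apply]

section TopologicalDynamics

variable {X : Type*} [TopologicalSpace X] {T : X → X} {x : X} {U : Set X} {d : ℝ}

lemma HypPt.map_semiconj {Y : Type*} [TopologicalSpace Y] {S : Y → Y} {φ : X → Y}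
    (hx : HypPt T x) (hφ : Continuous φ) (hφ_dense : DenseRange φ)
    (hφTS : Function.Semiconj φ T S) : HypPt S (φ x) := by
  have horbit : (fun n ↦ S^[n] (φ x)) = φ ∘ fun n ↦ T^[n] x :=
    funext fun n ↦ (hφTS.iterate_right n x).symm
  unfold HypPt
  rw [horbit]
  exact hφ_dense.comp hx hφ

lemma HypPt.separableSpace (hx : HypPt T x) : TopologicalSpace.SeparableSpace X :=
  ⟨_, countable_range _, hx⟩

lemma HypPt.denseRange [T1Space X] [∀ y : X, (𝓝[≠] y).NeBot] (hx : HypPt T x) :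
    DenseRange T := by
  refine (Dense.sdiff_singleton hx x).mono ?_
  rintro _ ⟨⟨_ | n, rfl⟩, hne⟩
  · exact absurd rfl hne
  · exact ⟨T^[n] x, (Function.iterate_succ_apply' T n x).symm⟩

lemma HypPt.iterate [T1Space X] [∀ y : X, (𝓝[≠] y).NeBot] (hx : HypPt T x) (hT : Continuous T)
    (m : ℕ) : HypPt T (T^[m] x) := by
  induction m with
  | zero => exact hx
  | succ m ih =>
    rw [Function.iterate_succ_apply']
    exact ih.map_semiconj hT hx.denseRange (Function.Commute.refl T)

lemma HypPt.eventually_residual_hypPt [T1Space X] [∀ y : X, (𝓝[≠] y).NeBot]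
    [SecondCountableTopology X] (hx : HypPt T x) (hT : Continuous T) :
    ∀ᶠ y in residual X, HypPt T y := by
  let 𝓑 := TopologicalSpace.countableBasis X
  have h𝓑 : TopologicalSpace.IsTopologicalBasis 𝓑 := TopologicalSpace.isBasis_countableBasis X
  have hvisit : ∀ U ∈ 𝓑, ∀ᶠ y in residual X, ∃ n, T^[n] y ∈ U := by
    intro U hU
    refine residual_of_dense_open ?_ ?_
    · rw [ofPred_exists]
      exact isOpen_iUnion fun n ↦ (h𝓑.isOpen hU).preimage (hT.iterate n)
    · refine Dense.mono ?_ hx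
      rintro _ ⟨m, rfl⟩
      exact DenseRange.exists_mem_open (hx.iterate hT m) (h𝓑.isOpen hU)
        (TopologicalSpace.nonempty_of_mem_countableBasis hU)
  have h𝓑_countable : 𝓑.Countable := TopologicalSpace.countable_countableBasis X
  filter_upwards [(eventually_countable_ball h𝓑_countable).2 hvisit] with y hy
  refine h𝓑.dense_iff.2 fun U hU _ ↦ ?_
  obtain ⟨n, hn⟩ := hy U hU
  exact ⟨_, hn, n, rfl⟩

lemma lowerSemicontinuous_prefixDensity_visitTimes (hT : Continuous T) (hU : IsOpen U) (n : ℕ) :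
    LowerSemicontinuous fun x ↦ prefixDensity (visitTimes T x U) n := by
  intro x d hd
  have hfin : (visitTimes T x U ∩ Icc 1 n).Finite := (finite_Icc 1 n).inter_of_right _
  have hnear : ∀ᶠ y in 𝓝 x, ∀ k ∈ visitTimes T x U ∩ Icc 1 n, T^[k] y ∈ U :=
    (eventually_all_finite hfin).2 fun k hk ↦
      (hT.iterate k).continuousAt.eventually_mem (hU.mem_nhds hk.1)
  filter_upwards [hnear] with y hy
  exact hd.trans_le (prefixDensity_le_of_inter_subset hy)

lemma eventually_residual_le_upperDensity_visitTimes (hT : Continuous T) (hU : IsOpen U)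
    (hd : Dense {x | d < upperDensity (visitTimes T x U)}) :
    ∀ᶠ x in residual X, d ≤ upperDensity (visitTimes T x U) := by
  have hlarge : ∀ N : ℕ, ∀ᶠ x in residual X, ∃ n ≥ N, d < prefixDensity (visitTimes T x U) n := by
    intro N
    refine residual_of_dense_open ?_ ?_
    · simp only [ofPred_exists, ofPred_and]
      exact isOpen_iUnion fun n ↦ isOpen_const.inter
        ((lowerSemicontinuous_prefixDensity_visitTimes hT hU n).isOpen_preimage d)
    · exact hd.mono fun x hx ↦ frequently_atTop.1 (frequently_lt_prefixDensity hx) N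
  filter_upwards [eventually_countable_forall.2 hlarge] with x hx
  exact le_upperDensity_of_frequently ((frequently_atTop.2 hx).mono fun _ ↦ le_of_lt)

lemma HypPt.eventually_residual_upperDensity_le (hx : HypPt T x) (hT : Continuous T)
    (hU : IsOpen U) :
    ∀ᶠ y in residual X, upperDensity (visitTimes T x U) ≤ upperDensity (visitTimes T y U) := by
  obtain ⟨d, -, hd_lt, hd_tendsto⟩ :=
    exists_seq_strictMono_tendsto (upperDensity (visitTimes T x U))
  have hdense (j : ℕ) : Dense {y | d j < upperDensity (visitTimes T y U)} := by
    refine Dense.mono ?_ hx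
    rintro _ ⟨m, rfl⟩
    rw [mem_ofPred_eq, visitTimes_iterate]
    exact (hd_lt j).trans_le (upperDensity_le_preimage_add _ m)
  filter_upwards [eventually_countable_forall.2 fun j ↦
    eventually_residual_le_upperDensity_visitTimes hT hU (hdense j)] with y hy
  exact le_of_tendsto' hd_tendsto hy

end TopologicalDynamics

section TopologicalModule

variable {𝕜 X : Type*} [DivisionRing 𝕜] [AddCommGroup X] [Module 𝕜 X] [TopologicalSpace X]

lemma semiconj_const_smul (T : X →L[𝕜] X) (a : 𝕜) :
    Function.Semiconj (a • ·) T T :=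
  fun y ↦ (map_smul T a y).symm

lemma HypPt.const_smul [ContinuousConstSMul 𝕜 X] {T : X →L[𝕜] X} {x : X} (hx : HypPt T x)
    {a : 𝕜} (ha : a ≠ 0) : HypPt T (a • x) :=
  hx.map_semiconj (continuous_const_smul a) (MulAction.surjective₀ ha).denseRange
    (semiconj_const_smul T a)

end TopologicalModule

section Normed

variable {X : Type*} [NormedAddCommGroup X] {x : X} {R α : ℝ}

lemma HypPt.upperDensity_le_cConst {T : X → X} (hx : HypPt T x) (hR : 0 < R) :
    upperDensity (visitTimes T x (closedBall 0 R)) ≤ cConst T := by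
  refine le_csSup ⟨1, ?_⟩ ⟨R, hR, x, hx, rfl⟩
  rintro _ ⟨_, -, _, -, rfl⟩
  exact upperDensity_le_one _

lemma HypPt.exists_seq_tendsto_cConst {T : X → X} (hx : HypPt T x) :
    ∃ (R : ℕ → ℝ) (z : ℕ → X), (∀ j, 0 < R j) ∧ (∀ j, HypPt T (z j)) ∧
      Tendsto (fun j ↦ upperDensity (visitTimes T (z j) (closedBall 0 (R j)))) atTop
        (𝓝 (cConst T)) := by
  let S : Set ℝ := {c | ∃ R : ℝ, 0 < R ∧ ∃ x : X, HypPt T x ∧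
    c = upperDensity (visitTimes T x (closedBall 0 R))}
  have hS : S.Nonempty := ⟨_, 1, one_pos, x, hx, rfl⟩
  have hS_bdd : BddAbove S := by
    refine ⟨cConst T, ?_⟩
    rintro _ ⟨R, hR, z, hz, rfl⟩
    exact hz.upperDensity_le_cConst hR
  obtain ⟨u, -, hu, huS⟩ := exists_seq_tendsto_sSup hS hS_bdd
  choose R hR z hz huz using huS
  exact ⟨R, z, hR, hz, (funext huz : u = _) ▸ hu⟩

variable {𝕜 : Type*} [NontriviallyNormedField 𝕜] [NormedSpace 𝕜 X] {T : X →L[𝕜] X}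

lemma HypPt.exists_visitTimes_closedBall_subset (hx : HypPt T x) (hR : 0 < R) (hα : 0 < α) :
    ∃ z, HypPt T z ∧ visitTimes T x (closedBall 0 R) ⊆ visitTimes T z (ball 0 α) := by
  obtain ⟨a, ha_pos, ha_lt⟩ := NormedField.exists_norm_lt 𝕜 (div_pos hα hR)
  refine ⟨a • x, hx.const_smul (norm_pos_iff.1 ha_pos), fun n hn ↦ ?_⟩
  have hn : ‖T^[n] x‖ ≤ R := mem_closedBall_zero_iff.1 hn
  have hiter : T^[n] (a • x) = a • T^[n] x := ((semiconj_const_smul T a).iterate_right n x).symm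
  refine mem_ball_zero_iff.2 ?_
  calc ‖T^[n] (a • x)‖ = ‖a‖ * ‖T^[n] x‖ := by rw [hiter, norm_smul]
    _ ≤ ‖a‖ * R := by gcongr
    _ < α := (lt_div_iff₀ hR).1 ha_lt

lemma HypPt.eventually_residual_upperDensity_closedBall_le (hx : HypPt T x) (hR : 0 < R)
    (hα : 0 < α) :
    ∀ᶠ y in residual X, upperDensity (visitTimes T x (closedBall 0 R)) ≤
      upperDensity (visitTimes T y (closedBall 0 α)) := by
  obtain ⟨z, hz, hsub⟩ := hx.exists_visitTimes_closedBall_subset hR hα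
  filter_upwards [hz.eventually_residual_upperDensity_le T.continuous isOpen_ball] with y hy
  calc upperDensity (visitTimes T x (closedBall 0 R))
      ≤ upperDensity (visitTimes T z (ball 0 α)) := upperDensity_mono hsub
    _ ≤ upperDensity (visitTimes T y (ball 0 α)) := hy
    _ ≤ upperDensity (visitTimes T y (closedBall 0 α)) :=
      upperDensity_mono fun _ hn ↦ ball_subset_closedBall hn

lemma HypPt.eventually_residual_hypPt_continuousLinearMap (hx : HypPt T x) :
    ∀ᶠ y in residual X, HypPt T y := by
  rcases subsingleton_or_nontrivial X with _ | _
  · exact .of_forall fun y ↦ Subsingleton.elim x y ▸ hx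
  · have := hx.separableSpace
    have := UniformSpace.secondCountable_of_separable X
    have (y : X) : (𝓝[≠] y).NeBot := Module.punctured_nhds_neBot 𝕜 X y
    exact hx.eventually_residual_hypPt T.continuous

end Normed

theorem stmt6_general {𝕜 X : Type*} [NontriviallyNormedField 𝕜] [NormedAddCommGroup X]
    [NormedSpace 𝕜 X] (T : X →L[𝕜] X) (hhc : ∃ x : X, HypPt T x) {α : ℝ} (hα : 0 < α) :
    {x : X | HypPt T x ∧ upperDensity {n : ℕ | T^[n] x ∈ closedBall 0 α} = cConst T} ∈
      residual X := by
  obtain ⟨x₀, hx₀⟩ := hhc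
  obtain ⟨R, z, hR, hz, hlim⟩ := hx₀.exists_seq_tendsto_cConst
  have hsup : ∀ᶠ x in residual X, ∀ j, upperDensity (visitTimes T (z j) (closedBall 0 (R j))) ≤
      upperDensity (visitTimes T x (closedBall 0 α)) :=
    eventually_countable_forall.2 fun j ↦
      (hz j).eventually_residual_upperDensity_closedBall_le (hR j) hα
  filter_upwards [hx₀.eventually_residual_hypPt_continuousLinearMap, hsup] with x hx hxsup
  exact ⟨hx, (hx.upperDensity_le_cConst hα).antisymm (le_of_tendsto' hlim hxsup)⟩

/-- Let `X` be a separable Banach space and `T` a hypercyclic bounded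
linear operator on `X`. For every `α > 0`, the set of hypercyclic vectors `x` such that
the upper density of `N_T(x, B̄(0,α))` equals `c(T)` is comeager in `X`. -/
theorem stmt6 {X : Type*} [NormedAddCommGroup X] [NormedSpace ℝ X] [CompleteSpace X]
    [TopologicalSpace.SeparableSpace X] [MeasurableSpace X] [BorelSpace X]
    (T : X →L[ℝ] X) (hhc : ∃ x : X, HypPt (⇑T) x) (α : ℝ) (hα : 0 < α) :
    {x : X | HypPt (⇑T) x ∧
      upperDensity {n : ℕ | (⇑T)^[n] x ∈ Metric.closedBall 0 α} = cConst (⇑T)} ∈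
      residual X :=
  stmt6_general T hhc hα
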